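/- arXiv:1202.0028 — 10 statements merged into one kernel-verified Lean document; each statement's English description precedes it below -/
import Mathlib

section
/- For all natural numbers n and λ, the coefficient of x^(n+λ) in (1+x+x^2)^n satisfies T(n,n+λ) = ∑_{α=0}^{n} C(λ+2α, α) · C(n, λ+2α), where C denotes the binomial coefficient (with C(m,j) = 0 when j > m). In particular, the central trinomial coefficient is p_n = ∑_{α} C(2α,α) · C(n,2α). -/
/-!
Expand `((1 + x^2) + x)^n = ∑ m, C(n, m) (1 + x^2)^m x^(n - m)`. The coefficient of `x^(n + lam)`
in the `m`-th term is `C(n, m)` times the coefficient of `x^(m + lam)` in `(1 + x^2)^m`. The latter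
vanishes unless `m = lam + 2 α` for some `α`, and then equals
`C(lam + 2 α, lam + α) = C(lam + 2 α, α)`. Reindexing the sum by `α` gives the claim.
-/

open Polynomial

/-- `T n k` is the coefficient of `x^k` in `(1 + x + x^2)^n` over `ℤ`. -/
noncomputable def T (n k : ℕ) : ℤ := (((1 + X + X ^ 2 : ℤ[X])) ^ n).coeff k

theorem coeff_one_add_X_sq_pow (m k : ℕ) :
    ((1 + X ^ 2 : ℤ[X]) ^ m).coeff k = if 2 ∣ k then (m.choose (k / 2) : ℤ) else 0 := by
  have h : (1 + X ^ 2 : ℤ[X]) ^ m = expand ℤ 2 ((1 + X) ^ m) := by simp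
  rw [h, coeff_expand (by norm_num), coeff_one_add_X_pow]

theorem coeff_one_add_X_sq_pow_of_eq (lam α : ℕ) :
    ((1 + X ^ 2 : ℤ[X]) ^ (lam + 2 * α)).coeff (lam + 2 * α + lam) =
      ((lam + 2 * α).choose α : ℤ) := by
  rw [coeff_one_add_X_sq_pow, if_pos (by omega),
    show (lam + 2 * α + lam) / 2 = lam + α by omega,
    Nat.choose_symm_of_eq_add (show lam + 2 * α = lam + α + α by ring)]

/-- When `m + lam` is odd this is parity; when `m < lam` the index `m + lam` exceeds the
degree `2 m`. -/
theorem coeff_one_add_X_sq_pow_eq_zero (m lam : ℕ) (h : ∀ α, lam + 2 * α ≠ m) :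
    ((1 + X ^ 2 : ℤ[X]) ^ m).coeff (m + lam) = 0 := by
  rw [coeff_one_add_X_sq_pow]
  split_ifs with h2
  · have := h ((m - lam) / 2)
    rw [Nat.choose_eq_zero_of_lt (by omega), Nat.cast_zero]
  · rfl

theorem T_eq_sum_coeff (n lam : ℕ) :
    T n (n + lam) = ∑ m ∈ Finset.range (n + 1),
      ((1 + X ^ 2 : ℤ[X]) ^ m).coeff (m + lam) * (n.choose m : ℤ) := by
  rw [T, show (1 + X + X ^ 2 : ℤ[X]) = (1 + X ^ 2) + X by ring, add_pow, finsetSum_coeff]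
  refine Finset.sum_congr rfl fun m hm => ?_
  have hm : m ≤ n := by simpa [Nat.lt_succ_iff] using hm
  rw [coeff_mul_natCast, show n + lam = (m + lam) + (n - m) by omega, coeff_mul_X_pow]

theorem trinomial_coeff_eq_sum_central_binomials (n lam : ℕ) :
    T n (n + lam) = ∑ α ∈ Finset.range (n + 1),
      ((lam + 2 * α).choose α : ℤ) * (n.choose (lam + 2 * α) : ℤ) := by
  rw [T_eq_sum_coeff]
  -- Enlarge the range of `m` so that it contains `lam + 2 * α` for every `α ≤ n`;
  -- the added terms vanish because `n.choose m = 0` for `n < m`.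
  rw [Finset.sum_subset (Finset.range_subset_range.2 (show n + 1 ≤ lam + 2 * n + 1 by omega))
    (fun m _ hm => by
      rw [Nat.choose_eq_zero_of_lt (by simpa using hm), Nat.cast_zero, mul_zero])]
  symm
  refine Finset.sum_of_injOn (fun α => lam + 2 * α) ?_ ?_ ?_ ?_
  · intro a _ b _ h
    simp only at h
    omega
  · intro a ha
    simp only [Finset.coe_range, Set.mem_Iio] at ha ⊢
    omega
  · intro m hm hnot
    rw [coeff_one_add_X_sq_pow_eq_zero, zero_mul]
    rintro α rfl
    refine hnot ⟨α, ?_, rfl⟩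
    simp only [Finset.coe_range, Set.mem_Iio, Finset.mem_range] at hm ⊢
    omega
  · intro α _
    rw [coeff_one_add_X_sq_pow_of_eq]
end

section
/- The central trinomial coefficients satisfy the three-term recurrence (n+2) · p_{n+2} = (2n+3) · p_{n+1} + 3(n+1) · p_n for every natural number n. -/
/-!
Put `Q = 1 + x + x²` and `F = Q ^ n`, and let `a j` be the coefficient of `x ^ (n + j)` in `F`.
Multiplying out `Q * F` and `Q² * F` gives `p (n+1) = a 1 + a 0 + a (-1)` and
`p (n+2) = a 2 + 2 a 1 + 3 a 0 + 2 a (-1) + a (-2)`.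
The differential equation `Q F' = n Q' F`, read off at the exponents `n`, `n + 1` and `n - 1`,
gives `a 1 = a (-1)`, `(n+2) a 2 + a 1 = n a 0` and `(n+2) a (-2) + a (-1) = n a 0`.
The recurrence is a linear combination of these relations. To keep exponents natural, `F` is
replaced throughout by `X² F`, so that `a j` is the coefficient at `n + 2 + j` (`coeff_rel`).
-/

open Polynomial

/-- The central trinomial coefficient. -/
noncomputable def p (n : ℕ) : ℤ := T n n

lemma coeff_quad_mul (G : ℤ[X]) (k : ℕ) :
    ((1 + X + X ^ 2) * G).coeff (k + 2) = G.coeff (k + 2) + G.coeff (k + 1) + G.coeff k := by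
  have e : (1 + X + X ^ 2) * G = G + X * G + X * (X * G) := by ring
  rw [e]
  simp only [coeff_add, coeff_X_mul]

lemma coeff_X_mul_derivative (G : ℤ[X]) (k : ℕ) :
    (X * derivative G).coeff k = k * G.coeff k := by
  cases k with
  | zero => simp
  | succ k => rw [coeff_X_mul, coeff_derivative]; push_cast; ring

/-- The equation `Q F' = n Q' F` for `F = Q ^ n`, rewritten for `G = X² F`. -/
lemma quad_pow_ode (n : ℕ) :
    (1 + X + X ^ 2 : ℤ[X]) * (X * derivative (X ^ 2 * (1 + X + X ^ 2 : ℤ[X]) ^ n)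
        - C 2 * (X ^ 2 * (1 + X + X ^ 2) ^ n))
      = C (n : ℤ) * (X * (X ^ 2 * (1 + X + X ^ 2) ^ n)
        + C 2 * (X * (X * (X ^ 2 * (1 + X + X ^ 2) ^ n)))) := by
  cases n with
  | zero => simp; ring_nf; simp
  | succ m =>
    simp only [derivative_mul, derivative_pow, derivative_add, derivative_X, derivative_one,
      Nat.add_sub_cancel, map_natCast, map_ofNat]
    push_cast
    ring

lemma coeff_rel (n k : ℕ) (c : ℕ → ℤ)
    (hc : c = fun i => (X ^ 2 * (1 + X + X ^ 2 : ℤ[X]) ^ n).coeff i) :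
    (k : ℤ) * c (k + 2) + (k - 1) * c (k + 1) + (k - 2) * c k = n * (c (k + 1) + 2 * c k) := by
  have h := congrArg (fun P => P.coeff (k + 2)) (quad_pow_ode n)
  simp only [coeff_quad_mul, coeff_sub, coeff_add, coeff_C_mul, coeff_X_mul_derivative] at h
  rw [coeff_X_mul, coeff_X_mul, coeff_X_mul] at h
  subst hc
  push_cast at h
  linear_combination h

theorem central_trinomial_three_term_recurrence (n : ℕ) :
    (n + 2 : ℤ) * p (n + 2) = (2 * n + 3 : ℤ) * p (n + 1) + 3 * (n + 1 : ℤ) * p n := by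
  obtain ⟨c, hc⟩ : ∃ c : ℕ → ℤ, c = fun i => (X ^ 2 * (1 + X + X ^ 2 : ℤ[X]) ^ n).coeff i :=
    ⟨_, rfl⟩
  have h0 : p n = c (n + 2) := by
    rw [hc]; exact (coeff_X_pow_mul _ 2 n).symm
  have h1 : p (n + 1) = c (n + 3) + c (n + 2) + c (n + 1) := by
    have e : X ^ 2 * (1 + X + X ^ 2 : ℤ[X]) ^ (n + 1)
        = (1 + X + X ^ 2) * (X ^ 2 * (1 + X + X ^ 2) ^ n) := by ring
    have := coeff_X_pow_mul ((1 + X + X ^ 2 : ℤ[X]) ^ (n + 1)) 2 (n + 1)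
    rw [e, coeff_quad_mul] at this
    rw [hc]; exact this.symm
  have h2 : p (n + 2)
      = c (n + 4) + 2 * c (n + 3) + 3 * c (n + 2) + 2 * c (n + 1) + c n := by
    have e : X ^ 2 * (1 + X + X ^ 2 : ℤ[X]) ^ (n + 2)
        = (1 + X + X ^ 2) * ((1 + X + X ^ 2) * (X ^ 2 * (1 + X + X ^ 2) ^ n)) := by ring
    have := coeff_X_pow_mul ((1 + X + X ^ 2 : ℤ[X]) ^ (n + 2)) 2 (n + 2)
    rw [e, coeff_quad_mul, coeff_quad_mul _ (n + 2), coeff_quad_mul _ (n + 1),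
      coeff_quad_mul _ n] at this
    have t : p (n + 2) = ((1 + X + X ^ 2 : ℤ[X]) ^ (n + 2)).coeff (n + 2) := rfl
    rw [t, ← this, hc]
    ring
  have r0 := coeff_rel n n c hc
  have r1 := coeff_rel n (n + 1) c hc
  have r2 := coeff_rel n (n + 2) c hc
  simp only [add_assoc, Nat.reduceAdd] at r1 r2
  push_cast at r1 r2
  -- The relation at exponent `n` carries the factor `n + 1`, which must be cancelled.
  have hs : c (n + 3) = c (n + 1) := by
    have hn : (n + 1 : ℤ) ≠ 0 := by positivity
    apply mul_left_cancel₀ hn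
    linear_combination r1
  rw [h0, h1, h2]
  rw [hs] at r2 ⊢
  linear_combination r2 - r0
end

section
/- For every natural number n and every natural number λ ≥ 1, twice the coefficient of x^(n+λ) in (1+x+x^2)^n is given by the finite-difference formula 2 · T(n, n+λ) = ∑_{j=0}^{⌊λ/2⌋} (−1)^j · (λ/(λ−j)) · C(λ−j, j) · Δ^{λ−2j} p_n, where Δ^m p_n := ∑_{i=0}^{m} (−1)^{m−i} C(m,i) p_{n+i} is the m-th forward difference of the central trinomial coefficients, and the equation is read in the rationals. -/
/-!
Put `q = 1 + X + X²`. Since `q - X = 1 + X²`, the binomial theorem applied to `(q - X)^m` shows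
that the `m`-th forward difference of `p` at `n` is the coefficient of `X^(n+m)` in
`(1 + X²)^m q^n` (`forwardDiff_p`). Girard–Waring's formula writes the power sum `a^l + b^l` as
`∑ j, (-1)^j l/(l-j) C(l-j, j) (ab)^j (a+b)^(l-2j)` (`sum_waring`). With `a = 1`, `b = X²`, multiply
by `q^n` and compare coefficients of `X^(n+l)`: the sum becomes the right-hand side of the theorem,
while `(1 + X^(2l)) q^n` contributes `T n (n+l)` plus the coefficient of `X^(n-l)` in `q^n`,
which equals `T n (n+l)` because `q^n` is palindromic of degree `2n` (both vanish
when `l > n`).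
-/

open Polynomial

/-- The `m`-th forward difference of a sequence `a : ℕ → ℤ` at `n`. -/
def forwardDiff (a : ℕ → ℤ) (m n : ℕ) : ℤ :=
  ∑ i ∈ Finset.range (m + 1), (-1 : ℤ) ^ (m - i) * (m.choose i : ℤ) * a (n + i)

/-- The unsigned coefficient `l/(l-j) * C(l-j, j)` of Girard–Waring's formula. It vanishes
as soon as `2j > l`, including the junk cases `j ≥ l` with `l ≥ 1`. -/
def waringCoeff (l j : ℕ) : ℚ := ((l : ℚ) / ((l : ℚ) - (j : ℚ))) * ((l - j).choose j : ℚ)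

lemma waringCoeff_eq_zero {l j : ℕ} (h : l < 2 * j) : waringCoeff l j = 0 := by
  rw [waringCoeff, Nat.choose_eq_zero_of_lt (by omega)]
  simp

lemma waringCoeff_zero_right {l : ℕ} (h : 1 ≤ l) : waringCoeff l 0 = 1 := by
  have : (l : ℚ) ≠ 0 := by positivity
  simp [waringCoeff, this]

lemma waringCoeff_succ {l : ℕ} (hl : 1 ≤ l) (j : ℕ) :
    waringCoeff (l + 2) (j + 1) = waringCoeff (l + 1) (j + 1) + waringCoeff l j := by
  rcases lt_or_ge l (2 * j) with h | h
  · rw [waringCoeff_eq_zero (by omega), waringCoeff_eq_zero (by omega),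
      waringCoeff_eq_zero h, add_zero]
  obtain ⟨a, rfl⟩ : ∃ a, l = a + j := ⟨l - j, by omega⟩
  have ha : (a : ℚ) ≠ 0 := by
    have : 0 < a := by omega
    positivity
  have ha1 : (a : ℚ) + 1 ≠ 0 := by positivity
  have hj1 : (j : ℚ) + 1 ≠ 0 := by positivity
  have e1 : ((a + 1).choose (j + 1) : ℚ) = (a + 1) * a.choose j / (j + 1) := by
    rw [eq_div_iff hj1]
    exact_mod_cast (Nat.add_one_mul_choose_eq a j).symm
  have e2 : (a.choose (j + 1) : ℚ) = a.choose j * (a - j) / (j + 1) := by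
    rw [eq_div_iff hj1]
    have := Nat.choose_succ_right_eq a j
    rw [← Nat.cast_sub (by omega : j ≤ a)]
    exact_mod_cast this
  have s1 : a + j + 2 - (j + 1) = a + 1 := by omega
  have s2 : a + j + 1 - (j + 1) = a := by omega
  have s3 : a + j - j = a := by omega
  have d1 : ((a + j + 2 : ℕ) : ℚ) - ((j + 1 : ℕ) : ℚ) = a + 1 := by push_cast; ring
  have d2 : ((a + j + 1 : ℕ) : ℚ) - ((j + 1 : ℕ) : ℚ) = a := by push_cast; ring
  have d3 : ((a + j : ℕ) : ℚ) - (j : ℚ) = a := by push_cast; ring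
  rw [waringCoeff, waringCoeff, waringCoeff, s1, s2, s3, d1, d2, d3, e1, e2]
  push_cast
  field_simp
  ring

/-- Girard–Waring's formula for two variables. The number `N` of terms is only bounded below, as further
terms vanish; the proof is by the recurrence `s_{l+2} = (a+b) s_{l+1} - ab s_l` of power sums. -/
lemma sum_waring {R : Type*} [CommRing R] [Algebra ℚ R] (a b : R) :
    ∀ l N : ℕ, 1 ≤ l → l < 2 * N →
      ∑ j ∈ Finset.range N,
        ((-1) ^ j * waringCoeff l j) • ((a * b) ^ j * (a + b) ^ (l - 2 * j)) = a ^ l + b ^ l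
  | 0, _, h, _ => by omega
  | 1, N, _, hN => by
    obtain ⟨N, rfl⟩ : ∃ M, N = M + 1 := ⟨N - 1, by omega⟩
    rw [Finset.sum_range_succ', Finset.sum_eq_zero]
    · simp [waringCoeff_zero_right]
    · intro j _
      rw [waringCoeff_eq_zero (by omega)]
      simp
  | 2, N, _, hN => by
    obtain ⟨N, rfl⟩ : ∃ M, N = M + 2 := ⟨N - 2, by omega⟩
    rw [Finset.sum_range_succ', Finset.sum_range_succ', Finset.sum_eq_zero]
    · have h1 : waringCoeff 2 1 = 2 := by norm_num [waringCoeff]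
      simp only [h1, waringCoeff_zero_right (l := 2) (by norm_num)]
      norm_num [Algebra.smul_def, map_ofNat (algebraMap ℚ R) 2]
      ring
    · intro j _
      rw [waringCoeff_eq_zero (by omega)]
      simp
  | l + 3, N, _, hN => by
    obtain ⟨N, rfl⟩ : ∃ M, N = M + 1 := ⟨N - 1, by omega⟩
    have ih1 := sum_waring a b (l + 2) (N + 1) (by omega) (by omega)
    have ih2 := sum_waring a b (l + 1) N (by omega) (by omega)
    have key : a ^ (l + 3) + b ^ (l + 3) =
        (a + b) * (a ^ (l + 2) + b ^ (l + 2)) - a * b * (a ^ (l + 1) + b ^ (l + 1)) := by ring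
    rw [key, ← ih1, ← ih2, Finset.sum_range_succ', Finset.sum_range_succ', mul_add,
      Finset.mul_sum, Finset.mul_sum, add_sub_right_comm, ← Finset.sum_sub_distrib]
    congr 1
    · refine Finset.sum_congr rfl fun j _ => ?_
      rw [waringCoeff_succ (by omega) j, show l + 3 - 2 * (j + 1) = l + 1 - 2 * j by omega]
      rcases lt_or_ge (l + 2) (2 * (j + 1)) with h | h
      · rw [waringCoeff_eq_zero (by omega : l + 1 + 1 < 2 * (j + 1))]
        simp only [Algebra.smul_def, map_mul, map_pow, map_neg, map_one, map_add, map_zero]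
        ring
      · rw [show l + 1 - 2 * j = (l + 2 - 2 * (j + 1)) + 1 by omega]
        simp only [Algebra.smul_def, map_mul, map_pow, map_neg, map_one, map_add]
        ring
    · rw [waringCoeff_zero_right (by omega), waringCoeff_zero_right (by omega)]
      simp
      ring

lemma forwardDiff_p (m n : ℕ) :
    forwardDiff p m n = ((1 + X ^ 2 : ℤ[X]) ^ m * (1 + X + X ^ 2) ^ n).coeff (n + m) := by
  have h : (1 + X ^ 2 : ℤ[X]) = (1 + X + X ^ 2) + -X := by ring
  rw [h, add_pow, Finset.sum_mul, finsetSum_coeff, forwardDiff]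
  refine Finset.sum_congr rfl fun i hi => ?_
  have hi' : i ≤ m := by simpa [Nat.lt_succ_iff] using hi
  have e : ((1 + X + X ^ 2 : ℤ[X]) ^ i * (-X) ^ (m - i) * (m.choose i : ℤ[X])) *
      (1 + X + X ^ 2) ^ n =
      C ((-1) ^ (m - i) * (m.choose i : ℤ)) * ((1 + X + X ^ 2) ^ (n + i) * X ^ (m - i)) := by
    rw [neg_pow (X : ℤ[X])]
    simp only [map_mul, map_pow, map_neg, map_one, map_natCast]
    ring
  rw [e, coeff_C_mul, show n + m = (n + i) + (m - i) by omega, coeff_mul_X_pow, p, T]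

lemma natDegree_trinomial : (1 + X + X ^ 2 : ℤ[X]).natDegree = 2 := by
  compute_degree!

lemma reverse_trinomial : (1 + X + X ^ 2 : ℤ[X]).reverse = 1 + X + X ^ 2 := by
  ext k
  rw [coeff_reverse, natDegree_trinomial]
  rcases lt_or_ge 2 k with h | h
  · rw [revAt_eq_self_of_lt h]
  · rw [revAt_le h]
    interval_cases k <;> simp [coeff_one, coeff_X, coeff_X_pow]

/-- `(1 + X + X²)^n` is palindromic of degree `2n`. -/
lemma T_symm {n k : ℕ} (h : k ≤ n) : T n (n - k) = T n (n + k) := by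
  have hr : ∀ n : ℕ, ((1 + X + X ^ 2 : ℤ[X]) ^ n).reverse = (1 + X + X ^ 2) ^ n := by
    intro n
    induction n with
    | zero => simpa using reverse_C (1 : ℤ)
    | succ n ih => rw [pow_succ, reverse_mul_of_domain, ih, reverse_trinomial]
  have hd : ((1 + X + X ^ 2 : ℤ[X]) ^ n).natDegree = 2 * n := by
    rw [natDegree_pow, natDegree_trinomial, mul_comm]
  rw [T, ← hr, coeff_reverse, hd, revAt_le (by omega), T]
  congr 1
  omega

lemma T_eq_zero {n k : ℕ} (h : n < k) : T n (n + k) = 0 := by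
  apply coeff_eq_zero_of_natDegree_lt
  rw [natDegree_pow, natDegree_trinomial]
  omega

lemma coeff_one_add_X_pow_mul (n l : ℕ) :
    ((1 + (X ^ 2) ^ l : ℤ[X]) * (1 + X + X ^ 2) ^ n).coeff (n + l) = 2 * T n (n + l) := by
  rw [add_mul, one_mul, coeff_add, ← pow_mul, coeff_X_pow_mul']
  change T n (n + l) + _ = _
  split_ifs with h
  · rw [← T_symm (by omega : l ≤ n), T, show n + l - 2 * l = n - l by omega, two_mul]
  · rw [T_eq_zero (by omega), add_zero, mul_zero]

theorem two_mul_diagonal_eq_finite_difference_formula (n lam : ℕ) (hlam : 1 ≤ lam) :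
    (2 * T n (n + lam) : ℚ) =
      ∑ j ∈ Finset.range (lam / 2 + 1),
        (-1 : ℚ) ^ j * ((lam : ℚ) / ((lam : ℚ) - (j : ℚ))) * ((lam - j).choose j : ℚ) *
          (forwardDiff p (lam - 2 * j) n : ℚ) := by
  have hw := sum_waring (1 : ℚ[X]) (X ^ 2) lam (lam / 2 + 1) hlam (by omega)
  have hw' := congrArg (fun f : ℚ[X] => (f * (1 + X + X ^ 2) ^ n).coeff (n + lam)) hw
  have hc := congrArg (Int.cast : ℤ → ℚ) (coeff_one_add_X_pow_mul n lam)
  rw [← eq_intCast (Int.castRingHom ℚ), ← coeff_map] at hc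
  simp only [Polynomial.map_mul, Polynomial.map_add, Polynomial.map_pow, Polynomial.map_one,
    Polynomial.map_X] at hc
  simp only [one_pow, one_mul] at hw'
  rw [hc] at hw'
  push_cast at hw'
  rw [← hw', Finset.sum_mul, finsetSum_coeff]
  refine Finset.sum_congr rfl fun j hj => ?_
  have hj' : 2 * j ≤ lam := by
    have := Finset.mem_range.mp hj
    omega
  rw [smul_mul_assoc, coeff_smul, smul_eq_mul, waringCoeff, ← pow_mul, mul_assoc (X ^ (2 * j)),
    show n + lam = (n + (lam - 2 * j)) + 2 * j by omega, coeff_X_pow_mul, forwardDiff_p,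
    ← eq_intCast (Int.castRingHom ℚ), ← coeff_map]
  simp only [Polynomial.map_mul, Polynomial.map_add, Polynomial.map_pow, Polynomial.map_one,
    Polynomial.map_X]
  ring
end

section
/- For every natural number n, the central trinomial coefficient has the integral representation p_n = (1/π) · ∫_0^π (1 + 2·cos φ)^n dφ. -/
open Polynomial Real

lemma integral_cos_int_mul (m : ℤ) :
    ∫ φ in (0:ℝ)..π, Real.cos (m * φ) = if m = 0 then π else 0 := by
  split_ifs with h
  · simp [h]
  · have h' : (m : ℝ) ≠ 0 := by exact_mod_cast h
    rw [intervalIntegral.integral_comp_mul_left (fun x => Real.cos x) h']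
    simp [Real.sin_int_mul_pi]

/-- Cosine expansion of `(1 + 2 cos φ)^n`: the real part of `z^(-n) (1 + z + z²)^n` at
`z = exp (iφ)`. Any `N` exceeding the degree may serve as the summation bound. -/
lemma cos_expansion (n N : ℕ) (hN : ((1 + X + X ^ 2 : ℤ[X]) ^ n).natDegree < N) (φ : ℝ) :
    (1 + 2 * Real.cos φ) ^ n =
      ∑ k ∈ Finset.range N, (T n k : ℝ) * Real.cos (((k : ℤ) - (n : ℤ) : ℤ) * φ) := by
  set z : ℂ := Complex.exp (φ * Complex.I) with hz
  set w : ℂ := Complex.exp (-φ * Complex.I) with hw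
  have hzw : z * w = 1 := by
    rw [hz, hw, ← Complex.exp_add]; simp
  have hcos : 2 * Complex.cos φ = z + w := Complex.two_cos φ
  have hP : (z * (1 + 2 * (Real.cos φ : ℂ))) ^ n = ∑ k ∈ Finset.range N, (T n k : ℂ) * z ^ k := by
    have h := eval₂_eq_sum_range' (Int.castRingHom ℂ) hN z
    rw [eval₂_pow] at h
    simp only [eval₂_add, eval₂_one, eval₂_X, eval₂_pow] at h
    have hbase : z * (1 + 2 * (Real.cos φ : ℂ)) = 1 + z + z ^ 2 := by
      rw [Complex.ofReal_cos, hcos]; linear_combination hzw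
    rw [hbase, h]
    rfl
  have hterm (k : ℕ) : w ^ n * z ^ k =
      Complex.exp (((((k : ℤ) - (n : ℤ) : ℤ) * φ : ℝ) : ℂ) * Complex.I) := by
    rw [hz, hw, ← Complex.exp_nat_mul, ← Complex.exp_nat_mul, ← Complex.exp_add]
    congr 1; push_cast; ring
  have hmain : (((1 + 2 * Real.cos φ) ^ n : ℝ) : ℂ) = ∑ k ∈ Finset.range N, ((T n k : ℝ) : ℂ) *
      Complex.exp (((((k : ℤ) - (n : ℤ) : ℤ) * φ : ℝ) : ℂ) * Complex.I) := by
    calc (((1 + 2 * Real.cos φ) ^ n : ℝ) : ℂ)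
        = w ^ n * (z * (1 + 2 * (Real.cos φ : ℂ))) ^ n := by
          rw [← mul_pow, ← mul_assoc, mul_comm w, hzw]; push_cast; ring
      _ = _ := by
          rw [hP, Finset.mul_sum]
          refine Finset.sum_congr rfl fun k _ => ?_
          rw [← hterm]; push_cast; ring
  have hre := congrArg Complex.re hmain
  rw [Complex.ofReal_re, Complex.re_sum] at hre
  simpa only [Complex.re_ofReal_mul, Complex.exp_ofReal_mul_I_re] using hre

theorem central_trinomial_integral_representation (n : ℕ) :
    (p n : ℝ) = (1 / π) * ∫ φ in (0:ℝ)..π, (1 + 2 * Real.cos φ) ^ n := by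
  -- The range is taken large enough to contain both `n` and the degree.
  set N := ((1 + X + X ^ 2 : ℤ[X]) ^ n).natDegree + n + 1 with hN
  simp_rw [cos_expansion n N (by omega)]
  rw [intervalIntegral.integral_finsetSum
    (fun k _ => Continuous.intervalIntegrable (by fun_prop) _ _)]
  simp_rw [intervalIntegral.integral_const_mul, integral_cos_int_mul]
  rw [Finset.sum_eq_single n]
  · simp [p]; field_simp
  · intro k _ hk
    rw [if_neg (by omega), mul_zero]
  · intro h
    exact absurd (Finset.mem_range.mpr (by omega)) h
end

section
/- For all natural numbers n and λ, the coefficient of x^(n+λ) in (1+x+x^2)^n has the integral representation T(n, n+λ) = (1/π) · ∫_0^π cos(λφ) · (1 + 2·cos φ)^n dφ. -/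
/-!
On the unit circle `z = e^{iφ}` one has `1 + z + z² = z (1 + 2 cos φ)`. Multiplying the `n`-th power
of this identity by `z^{-(n+λ)}` and taking real parts expands the integrand
`cos (λφ) (1 + 2 cos φ)^n` as the cosine sum `∑ j, T n j * cos ((j - (n + λ)) φ)`
(`cos_mul_pow_eq_sum`). Since `cos (mφ)` integrates to `0` over `[0, π]` for every nonzero integer
`m` (`integral_cos_int_mul`), only the term `j = n + λ` survives, contributing `π * T n (n + λ)`.
-/

open Polynomial Real

lemma trinomial_exp (φ : ℝ) :
    1 + Complex.exp (φ * Complex.I) + Complex.exp (φ * Complex.I) ^ 2 =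
      Complex.exp (φ * Complex.I) * ((1 + 2 * Real.cos φ : ℝ) : ℂ) := by
  have h : Complex.exp (φ * Complex.I) * Complex.exp (-φ * Complex.I) = 1 := by
    rw [← Complex.exp_add]; simp
  push_cast
  rw [Complex.two_cos]
  linear_combination -h

/-- The range `N` of the sum is arbitrary as long as it exceeds the degree of `(1 + X + X ^ 2) ^ n`;
the coefficients beyond the degree vanish. -/
lemma cos_mul_pow_eq_sum (n lam N : ℕ) (hN : ((1 + X + X ^ 2 : ℤ[X]) ^ n).natDegree < N) (φ : ℝ) :
    Real.cos (lam * φ) * (1 + 2 * Real.cos φ) ^ n =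
      ∑ j ∈ Finset.range N, (T n j : ℝ) * Real.cos (((j - (n + lam : ℕ) : ℤ) : ℝ) * φ) := by
  set z := Complex.exp (φ * Complex.I) with hz
  have hexpand : (z * ((1 + 2 * Real.cos φ : ℝ) : ℂ)) ^ n
      = ∑ j ∈ Finset.range N, (T n j : ℂ) * z ^ j := by
    rw [← trinomial_exp φ]
    have h := Polynomial.aeval_eq_sum_range' hN z
    simpa [T] using h
  have hmul : Complex.exp (((-(lam * φ) : ℝ) : ℂ) * Complex.I)
        * (((1 + 2 * Real.cos φ) ^ n : ℝ) : ℂ)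
      = ∑ j ∈ Finset.range N, ((T n j : ℝ) : ℂ) *
          Complex.exp (((((j - (n + lam : ℕ) : ℤ) : ℝ) * φ : ℝ) : ℂ) * Complex.I) := by
    have h := congrArg (fun w => Complex.exp (-((n + lam : ℕ) : ℂ) * (φ * Complex.I)) * w) hexpand
    simp only [mul_pow, Finset.mul_sum] at h
    convert h using 1
    · rw [← mul_assoc, hz, ← Complex.exp_nat_mul, ← Complex.exp_add]
      push_cast
      congr 2
      ring
    · refine Finset.sum_congr rfl fun j _ => ?_
      rw [mul_left_comm, hz, ← Complex.exp_nat_mul, ← Complex.exp_add]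
      push_cast
      congr 2
      ring
  have hre := congrArg Complex.re hmul
  rw [Complex.re_sum, Complex.re_mul_ofReal, Complex.exp_ofReal_mul_I_re, Real.cos_neg] at hre
  simpa only [Complex.re_ofReal_mul, Complex.exp_ofReal_mul_I_re] using hre

theorem trinomial_diagonal_integral_representation (n lam : ℕ) :
    (T n (n + lam) : ℝ) =
      (1 / π) * ∫ φ in (0:ℝ)..π, Real.cos (lam * φ) * (1 + 2 * Real.cos φ) ^ n := by
  -- A range that covers both the degree and the index `n + lam`, which may exceed the degree.
  set N := ((1 + X + X ^ 2 : ℤ[X]) ^ n).natDegree + (n + lam) + 1 with hN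
  simp_rw [cos_mul_pow_eq_sum n lam N (by omega)]
  rw [intervalIntegral.integral_finsetSum
    fun j _ => (by fun_prop : Continuous _).intervalIntegrable _ _]
  simp_rw [intervalIntegral.integral_const_mul, integral_cos_int_mul]
  rw [Finset.sum_eq_single (n + lam)]
  · rw [if_pos (sub_self _)]
    field_simp
  · intro j _ hj
    rw [if_neg (by omega), mul_zero]
  · intro h
    exact absurd (Finset.mem_range.2 (by omega)) h
end

section
/- For every natural number n and every real number φ, (1 + 2·cos φ)^n = p_n + 2 · ∑_{λ=1}^{n} T(n, n+λ) · cos(λφ); that is, the trinomial coefficients of (1+x+x^2)^n are precisely the cosine (Fourier) coefficients of the function (1+2·cos φ)^n. -/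
/-!
With `z = exp (iφ)` one has `1 + z + z² = z (1 + 2 cos φ)`, so evaluating `(1 + X + X²)^n` at `z`
and dividing by `z^n` gives `(1 + 2 cos φ)^n = ∑ₖ T n k · z^(k-n)`, whose real part is
`∑ₖ T n k · cos ((k - n) φ)` over `0 ≤ k ≤ 2n`. The polynomial `1 + X + X²` is palindromic, hence so
are its powers, i.e. `T n (n - l) = T n (n + l)`; as cosine is even, the terms `k = n ± l` agree, and
folding the sum around `k = n` yields the expansion.
-/

open Polynomial Real

lemma natDegree_trinomial_pow_le (n : ℕ) : ((1 + X + X ^ 2 : ℤ[X]) ^ n).natDegree ≤ 2 * n := by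
  have h : (1 + X + X ^ 2 : ℤ[X]).natDegree ≤ 2 := by compute_degree
  calc _ ≤ n * (1 + X + X ^ 2 : ℤ[X]).natDegree := natDegree_pow_le
    _ ≤ n * 2 := by gcongr
    _ = 2 * n := mul_comm _ _

/-- Powers of the palindromic polynomial `1 + X + X²` are palindromic. -/
lemma reflect_trinomial_pow (n : ℕ) :
    reflect (2 * n) ((1 + X + X ^ 2 : ℤ[X]) ^ n) = (1 + X + X ^ 2) ^ n := by
  induction n with
  | zero => simp
  | succ n ih =>
    have h : (1 + X + X ^ 2 : ℤ[X]).natDegree ≤ 2 := by compute_degree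
    have h2 : reflect 2 (1 + X + X ^ 2 : ℤ[X]) = 1 + X + X ^ 2 := by
      have h1 : reflect 2 (X : ℤ[X]) = X := by
        have := reflect_monomial (R := ℤ) 2 1
        simpa [revAt_le] using this
      rw [reflect_add, reflect_add, reflect_one, h1, reflect_monomial, revAt_le le_rfl]
      ring
    rw [pow_succ, mul_add, mul_one, reflect_mul _ _ (natDegree_trinomial_pow_le n) h, ih, h2]

lemma T_sub_eq_T_add {n l : ℕ} (hl : l ≤ n) : T n (n - l) = T n (n + l) := by
  unfold T
  conv_lhs => rw [← reflect_trinomial_pow, coeff_reflect, revAt_le (by omega)]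
  congr 1
  omega

lemma sum_T_mul_cos (n : ℕ) (φ : ℝ) :
    (1 + 2 * Real.cos φ) ^ n =
      ∑ k ∈ Finset.range (2 * n + 1), (T n k : ℝ) * Real.cos (((k : ℝ) - n) * φ) := by
  set z : ℂ := Complex.exp (φ * Complex.I) with hz
  have hz0 : z ≠ 0 := Complex.exp_ne_zero _
  have hbase : 1 + z + z ^ 2 = z * (1 + 2 * Real.cos φ : ℝ) := by
    have hinv : z * Complex.exp (-φ * Complex.I) = 1 := by
      rw [hz, ← Complex.exp_add]; simp
    push_cast
    rw [Complex.two_cos, ← hz]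
    linear_combination -hinv
  have heval : (1 + z + z ^ 2) ^ n = ∑ k ∈ Finset.range (2 * n + 1), (T n k : ℂ) * z ^ k := by
    have := aeval_eq_sum_range' (Nat.lt_succ_of_le (natDegree_trinomial_pow_le n)) z
    simpa [T] using this
  have hC : (((1 + 2 * Real.cos φ) ^ n : ℝ) : ℂ) =
      ∑ k ∈ Finset.range (2 * n + 1),
        ((T n k : ℝ) : ℂ) * Complex.exp (((((k : ℝ) - n) * φ : ℝ) : ℂ) * Complex.I) := by
    apply mul_left_cancel₀ (pow_ne_zero n hz0)
    rw [Complex.ofReal_pow, ← mul_pow, ← hbase, heval, Finset.mul_sum]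
    refine Finset.sum_congr rfl fun k _ => ?_
    rw [mul_left_comm, hz, ← Complex.exp_nat_mul, ← Complex.exp_nat_mul, ← Complex.exp_add]
    push_cast
    congr 2
    ring
  have hre := congrArg Complex.re hC
  rw [Complex.ofReal_re, Complex.re_sum] at hre
  simpa only [Complex.re_ofReal_mul, Complex.exp_ofReal_mul_I_re] using hre

/-- Folding a sum over `0, …, 2n` around its central term. -/
lemma sum_range_two_mul_add_one (n : ℕ) (f : ℕ → ℝ) :
    ∑ k ∈ Finset.range (2 * n + 1), f k =
      f n + ∑ l ∈ Finset.Icc 1 n, (f (n - l) + f (n + l)) := by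
  have hIcc : Finset.Icc 1 n = Finset.Ico 1 (n + 1) := by ext; simp
  rw [show 2 * n + 1 = n + (n + 1) by ring, Finset.sum_range_add, Finset.sum_range_succ', hIcc,
    Finset.sum_Ico_eq_sum_range, Finset.sum_add_distrib, ← Finset.sum_range_reflect]
  simp only [Nat.add_sub_cancel, add_zero, Nat.sub_sub]
  simp only [add_comm 1]
  ring_nf

theorem trinomial_cosine_expansion (n : ℕ) (φ : ℝ) :
    (1 + 2 * Real.cos φ) ^ n =
      (p n : ℝ) + 2 * ∑ lam ∈ Finset.Icc 1 n, (T n (n + lam) : ℝ) * Real.cos (lam * φ) := by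
  rw [sum_T_mul_cos, sum_range_two_mul_add_one, Finset.mul_sum]
  congr 1
  · simp [p]
  · refine Finset.sum_congr rfl fun l hl => ?_
    have hln : l ≤ n := (Finset.mem_Icc.mp hl).2
    rw [T_sub_eq_T_add hln, Nat.cast_sub hln, Nat.cast_add,
      show ((n : ℝ) - l - n) * φ = -(l * φ) by ring,
      show ((n : ℝ) + l - n) * φ = l * φ by ring, Real.cos_neg]
    ring
end

section
/- For every real number x with |x| < 1/3, the generating function of the central trinomial coefficients satisfies ∑_{n=0}^{∞} p_n · x^n = 1 / √(1 − 2x − 3x^2), the series being absolutely convergent. -/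
open Polynomial

/-!
Expanding `((1 + X²) + X)^n` binomially shows that `p n = ∑ m ≤ n, C(n, m) c_m`, where `c_m` is the
coefficient of `X^m` in `(1 + X²)^m`: zero for odd `m`, and `C(2k, k)` for `m = 2k`
(`p_eq_sum`, `midCoeff_two_mul`, `midCoeff_odd`).  So the generating function of `p` is a binomial
transform of that of `c`.  Since `∑ n, C(n, m) x^n = x^m / (1 - x)^(m+1)`, interchanging the two
summations gives
`∑ n, p n x^n = (1 - x)⁻¹ ∑ m, c_m y^m` with `y = x / (1 - x)`,
and the binomial series with exponent `-1/2` evaluates the last sum as `1 / √(1 - 4y²)`.  Finally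
`(1 - x)² (1 - 4y²) = (1 - x)² - 4x² = 1 - 2x - 3x²`.

The interchange is legitimate because, replacing `x` by `|x|`, the same computation yields a
convergent double series: `|x| < 1/3` is exactly the condition `|x| / (1 - |x|) < 1/2`.
-/

/-- The middle coefficient of `(1 + X²)^m`: the coefficient of `X^m`. -/
noncomputable def midCoeff (m : ℕ) : ℕ := ((1 + X ^ 2 : ℕ[X]) ^ m).coeff m

lemma one_add_X_sq_pow_eq_expand (m : ℕ) :
    (1 + X ^ 2 : ℕ[X]) ^ m = expand ℕ 2 ((1 + X) ^ m) := by
  simp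

lemma midCoeff_two_mul (k : ℕ) : midCoeff (2 * k) = k.centralBinom := by
  rw [midCoeff, one_add_X_sq_pow_eq_expand, mul_comm 2 k, coeff_expand_mul (by norm_num),
    coeff_one_add_X_pow, Nat.centralBinom_eq_two_mul_choose, mul_comm k 2]
  simp

lemma midCoeff_odd {m : ℕ} (hm : ¬ 2 ∣ m) : midCoeff m = 0 := by
  rw [midCoeff, one_add_X_sq_pow_eq_expand, coeff_expand (by norm_num), if_neg hm]

lemma p_eq_sum (n : ℕ) :
    p n = ∑ m ∈ Finset.range (n + 1), (n.choose m : ℤ) * (midCoeff m : ℤ) := by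
  have h : (1 + X + X ^ 2 : ℤ[X]) = (1 + X ^ 2) + X := by ring
  rw [p, T, h, add_pow, finsetSum_coeff]
  refine Finset.sum_congr rfl fun m hm => ?_
  have hmn : m ≤ n := Nat.lt_succ_iff.mp (Finset.mem_range.mp hm)
  have hc : ((1 + X ^ 2 : ℤ[X]) ^ m).coeff m = (midCoeff m : ℤ) := by
    have : (1 + X ^ 2 : ℤ[X]) ^ m = ((1 + X ^ 2 : ℕ[X]) ^ m).map (Nat.castRingHom ℤ) := by
      simp
    rw [this, coeff_map, midCoeff]
    simp
  rw [← Polynomial.C_eq_natCast, coeff_mul_C, coeff_mul_X_pow', if_pos (Nat.sub_le _ _),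
    Nat.sub_sub_self hmn, hc, mul_comm]

/-- The rising factorial `(1/2)(3/2)⋯` in terms of central binomial coefficients. -/
lemma ascPochhammer_half (n : ℕ) :
    (ascPochhammer ℝ n).eval (1 / 2) * 4 ^ n = n.factorial * n.centralBinom := by
  induction n with
  | zero => simp
  | succ n ih =>
    have h : ((n : ℝ) + 1) * (n + 1).centralBinom = 2 * (2 * n + 1) * n.centralBinom := by
      exact_mod_cast Nat.succ_mul_centralBinom_succ n
    rw [ascPochhammer_succ_eval, Nat.factorial_succ]
    push_cast
    linear_combination (4 * n + 2 : ℝ) * ih - (n.factorial : ℝ) * h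

lemma ringChoose_half (n : ℕ) :
    Ring.choose ((1 / 2 : ℝ) + n - 1) n = n.centralBinom / 4 ^ n := by
  rw [← Ring.multichoose_eq]
  have h := Ring.factorial_nsmul_multichoose_eq_ascPochhammer (1 / 2 : ℝ) n
  rw [ascPochhammer_smeval_eq_eval, nsmul_eq_mul] at h
  have h2 := ascPochhammer_half n
  have hf : (n.factorial : ℝ) ≠ 0 := by positivity
  rw [eq_div_iff (by positivity)]
  apply mul_left_cancel₀ hf
  rw [← h2, ← h]
  ring

lemma hasSum_centralBinom {z : ℝ} (hz : |z| < 1) :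
    HasSum (fun k : ℕ => (k.centralBinom : ℝ) / 4 ^ k * z ^ k) (1 / √(1 - z)) := by
  have h := (Real.one_div_one_sub_rpow_hasFPowerSeriesOnBall_zero (1 / 2)).hasSum (y := z)
    (by simpa [enorm_eq_nnnorm] using! hz)
  simpa [FormalMultilinearSeries.ofScalars_apply_eq, ringChoose_half, ← Real.sqrt_eq_rpow,
    mul_comm, -one_div] using! h

lemma hasSum_midCoeff {y : ℝ} (hy : |y| < 1 / 2) :
    HasSum (fun m : ℕ => (midCoeff m : ℝ) * y ^ m) (1 / √(1 - 4 * y ^ 2)) := by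
  have hz : |4 * y ^ 2| < 1 := by
    rw [abs_of_nonneg (by positivity)]
    have := abs_nonneg y
    nlinarith [sq_abs y]
  have hinj : Function.Injective (fun k : ℕ => 2 * k) := fun a b h => by
    simpa using h
  refine (hinj.hasSum_iff ?_).mp ?_
  · intro m hm
    have : ¬ 2 ∣ m := fun ⟨k, hk⟩ => hm ⟨k, hk.symm⟩
    simp [midCoeff_odd this]
  · convert hasSum_centralBinom hz using 2 with k
    simp only [Function.comp_apply, midCoeff_two_mul, pow_mul, mul_pow]
    field_simp

lemma hasSum_choose_mul_pow (m : ℕ) {x : ℝ} (hx : |x| < 1) :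
    HasSum (fun n : ℕ => (n.choose m : ℝ) * x ^ n) (x ^ m / (1 - x) ^ (m + 1)) := by
  have h := (hasSum_choose_mul_geometric_of_norm_lt_one m (r := x) hx).mul_left (x ^ m)
  have hinj : Function.Injective (fun n : ℕ => n + m) := add_left_injective m
  refine (hinj.hasSum_iff ?_).mp ?_
  · intro n hn
    have : n < m := by
      by_contra hlt
      exact hn ⟨n - m, by simp; omega⟩
    simp [Nat.choose_eq_zero_of_lt this]
  · rw [mul_one_div] at h
    have heq : (fun n : ℕ => (n.choose m : ℝ) * x ^ n) ∘ (fun n => n + m) =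
        fun n => x ^ m * (((n + m).choose m : ℝ) * x ^ n) := by
      ext n
      simp only [Function.comp_apply, pow_add]
      ring
    rwa [heq]

/-- The inner sums, over `n`, of the double series `c_m C(n, m) x^n`. -/
lemma hasSum_row (m : ℕ) {x : ℝ} (hx : |x| < 1) :
    HasSum (fun n : ℕ => (midCoeff m : ℝ) * ((n.choose m : ℝ) * x ^ n))
      ((1 - x)⁻¹ * ((midCoeff m : ℝ) * (x / (1 - x)) ^ m)) := by
  have h : (1 - x)⁻¹ * ((midCoeff m : ℝ) * (x / (1 - x)) ^ m) =
      midCoeff m * (x ^ m / (1 - x) ^ (m + 1)) := by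
    have : 1 - x ≠ 0 := by linarith [(abs_lt.mp hx).2]
    rw [div_pow, pow_succ]
    field_simp
  rw [h]
  exact (hasSum_choose_mul_pow m hx).mul_left (midCoeff m : ℝ)

lemma summable_double {x : ℝ} (hx : |x| < 1 / 3) :
    Summable (fun q : ℕ × ℕ => (midCoeff q.1 : ℝ) * ((q.2.choose q.1 : ℝ) * |x| ^ q.2)) := by
  have h0 : |(|x|)| < 1 := by rw [abs_abs]; linarith
  have hy : |(|x| / (1 - |x|))| < 1 / 2 := by
    have := abs_nonneg x
    rw [abs_of_nonneg (div_nonneg this (by linarith)), div_lt_iff₀ (by linarith)]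
    linarith
  rw [summable_prod_of_nonneg (fun q => by positivity)]
  refine ⟨fun m => (hasSum_row m h0).summable, ?_⟩
  simp only [(hasSum_row _ h0).tsum_eq]
  exact (hasSum_midCoeff hy).summable.mul_left _

/-- The inner sums, over `m`, of the double series `c_m C(n, m) x^n`. -/
lemma hasSum_column (n : ℕ) (x : ℝ) :
    HasSum (fun m : ℕ => (midCoeff m : ℝ) * ((n.choose m : ℝ) * x ^ n)) ((p n : ℝ) * x ^ n) := by
  have : (p n : ℝ) * x ^ n =
      ∑ m ∈ Finset.range (n + 1), (midCoeff m : ℝ) * ((n.choose m : ℝ) * x ^ n) := by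
    rw [p_eq_sum]
    push_cast
    rw [Finset.sum_mul]
    exact Finset.sum_congr rfl fun m _ => by ring
  rw [this]
  refine hasSum_sum_of_ne_finset_zero fun m hm => ?_
  rw [Nat.choose_eq_zero_of_lt (by simpa using hm)]
  simp

theorem central_trinomial_generating_function (x : ℝ) (hx : |x| < 1 / 3) :
    Summable (fun n : ℕ => |(p n : ℝ) * x ^ n|) ∧
      ∑' n : ℕ, (p n : ℝ) * x ^ n = 1 / Real.sqrt (1 - 2 * x - 3 * x ^ 2) := by
  have hx1 : |x| < 1 := by linarith
  obtain ⟨hl, hr⟩ := abs_lt.mp hx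
  have hpos : 0 < 1 - x := by linarith
  have hy : |x / (1 - x)| < 1 / 2 := by
    rw [abs_lt]
    constructor
    · rw [lt_div_iff₀ hpos]; linarith
    · rw [div_lt_iff₀ hpos]; linarith
  have hS : Summable (fun q : ℕ × ℕ => (midCoeff q.1 : ℝ) * ((q.2.choose q.1 : ℝ) * x ^ q.2)) := by
    refine Summable.of_norm ?_
    convert summable_double hx using 2 with q
    simp
  have hrow := hS.hasSum.prod_fiberwise (fun m => hasSum_row m hx1)
  have hcol := ((Equiv.prodComm ℕ ℕ).hasSum_iff.mpr hS.hasSum).prod_fiberwise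
    (fun n => hasSum_column n x)
  refine ⟨hcol.summable.abs, ?_⟩
  rw [hcol.tsum_eq, hrow.unique ((hasSum_midCoeff hy).mul_left _)]
  have hfac : 1 - 2 * x - 3 * x ^ 2 = (1 - x) ^ 2 * (1 - 4 * (x / (1 - x)) ^ 2) := by
    field_simp
    ring
  rw [hfac, Real.sqrt_mul (sq_nonneg _), Real.sqrt_sq hpos.le, one_div, one_div, mul_inv]
end

section
/- Fix a natural number λ and a real number x with 0 < x < 1/3, and set ν := (1 − x − √(1 − 2x − 3x^2))/2. Then the diagonal generating function of the trinomial coefficients satisfies ∑_{n=0}^{∞} T(n, n+λ) · x^(n+λ) = ν^λ / √(1 − 2x − 3x^2), the series being absolutely convergent. -/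
/-!
Write `c n k` for the coefficient of `t^k` (`k ∈ ℤ`) in the Laurent polynomial `(t⁻¹ + 1 + t)^n`, so
that `T n (n + k) = c n k`, and put `S k = ∑ₙ c n k x^n`. Since `0 ≤ c n k ≤ 3^n`, the series
converges absolutely and `S` is bounded by `(1 - 3x)⁻¹`, uniformly in `k`. The Pascal-type rule for
`c` gives `S k = δ_{k,0} + x (S (k-1) + S k + S (k+1))`.

With `s = √(1 - 2x - 3x²)`, the numbers `ν = (1 - x - s)/2` and `μ = (1 - x + s)/2` satisfy
`ν + μ = 1 - x` and `ν μ = x²`. Hence `E k = x S (k+1) - ν S k` satisfies `x E (k+1) = μ E k` for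
`k ≥ 0`. As `μ > x` and `E` is bounded, `E = 0`, so `x^k S k = ν^k S 0`. The rule at `k = 0` together
with the symmetry `S (-1) = S 1` yields `s S 0 = 1`.
-/

open Polynomial

/-- The coefficient of `t^k` in the Laurent polynomial `(t⁻¹ + 1 + t)^n`, defined by its
Pascal-type recurrence. -/
def centralCoeff : ℕ → ℤ → ℤ
  | 0, k => if k = 0 then 1 else 0
  | n + 1, k => centralCoeff n (k - 1) + centralCoeff n k + centralCoeff n (k + 1)

lemma centralCoeff_eq_zero (n : ℕ) : ∀ k : ℤ, k < -n → centralCoeff n k = 0 := by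
  induction n with
  | zero => intro k hk; simp only [centralCoeff]; rw [if_neg]; push_cast at hk; omega
  | succ n ih =>
    intro k hk
    push_cast at hk
    simp only [centralCoeff]
    rw [ih _ (by omega), ih _ (by omega), ih _ (by omega)]
    rfl

lemma centralCoeff_neg (n : ℕ) : ∀ k : ℤ, centralCoeff n (-k) = centralCoeff n k := by
  induction n with
  | zero => intro k; simp [centralCoeff]
  | succ n ih =>
    intro k
    simp only [centralCoeff]
    rw [show -k - 1 = -(k + 1) by ring, show -k + 1 = -(k - 1) by ring, ih, ih, ih]
    ring

lemma centralCoeff_bounds (n : ℕ) :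
    ∀ k : ℤ, 0 ≤ centralCoeff n k ∧ centralCoeff n k ≤ 3 ^ n := by
  induction n with
  | zero => intro k; simp only [centralCoeff]; split_ifs <;> simp
  | succ n ih =>
    intro k
    simp only [centralCoeff]
    have h1 := ih (k - 1)
    have h2 := ih k
    have h3 := ih (k + 1)
    rw [pow_succ]
    constructor <;> linarith

lemma T_eq_centralCoeff (n : ℕ) : ∀ k : ℕ, T n k = centralCoeff n (k - n) := by
  induction n with
  | zero => intro k; simp [T, centralCoeff, coeff_one]
  | succ n ih =>
    intro k
    have hT : ∀ j, T (n + 1) j = T n j + ((1 + X + X ^ 2 : ℤ[X]) ^ n * X).coeff j +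
        ((1 + X + X ^ 2 : ℤ[X]) ^ n * X ^ 2).coeff j := by
      intro j
      simp only [T, pow_succ _ n, mul_add, coeff_add, mul_one]
    rw [hT]
    match k with
    | 0 =>
      rw [mul_coeff_zero, mul_coeff_zero, ih]
      simp only [centralCoeff]
      have h1 := centralCoeff_eq_zero n (-1 - n) (by omega)
      have h2 := centralCoeff_eq_zero n (-2 - n) (by omega)
      push_cast
      ring_nf at h1 h2 ⊢
      simp [h1, h2]
    | 1 =>
      rw [coeff_mul_X, coeff_mul_X_pow']
      have h0 := ih 0
      simp only [T] at h0
      rw [ih, h0]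
      simp only [centralCoeff]
      rw [centralCoeff_eq_zero n (_ - _ - _) (by push_cast; omega)]
      norm_num
      ring_nf
    | k + 2 =>
      rw [coeff_mul_X, coeff_mul_X_pow]
      have h0 := ih k
      have h1 := ih (k + 1)
      simp only [T] at h0 h1
      rw [ih, h0, h1]
      simp only [centralCoeff]
      push_cast
      ring_nf

/-- The generating function `∑ₙ c n k x^n` of the `k`-th diagonal. -/
noncomputable def diagSum (x : ℝ) (k : ℤ) : ℝ := ∑' n : ℕ, (centralCoeff n k : ℝ) * x ^ n

lemma term_bounds {x : ℝ} (hx₁ : 0 < x) (k : ℤ) (n : ℕ) :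
    0 ≤ (centralCoeff n k : ℝ) * x ^ n ∧ (centralCoeff n k : ℝ) * x ^ n ≤ (3 * x) ^ n := by
  obtain ⟨h0, h1⟩ := centralCoeff_bounds n k
  have h0' : (0 : ℝ) ≤ centralCoeff n k := by exact_mod_cast h0
  have h1' : (centralCoeff n k : ℝ) ≤ 3 ^ n := by exact_mod_cast h1
  refine ⟨by positivity, ?_⟩
  rw [mul_pow]
  gcongr

lemma summable_term {x : ℝ} (hx₁ : 0 < x) (hx₂ : x < 1 / 3) (k : ℤ) :
    Summable fun n : ℕ => (centralCoeff n k : ℝ) * x ^ n :=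
  Summable.of_nonneg_of_le (fun n => (term_bounds hx₁ k n).1) (fun n => (term_bounds hx₁ k n).2)
    (summable_geometric_of_lt_one (by linarith) (by linarith))

lemma abs_diagSum_le {x : ℝ} (hx₁ : 0 < x) (hx₂ : x < 1 / 3) (k : ℤ) :
    |diagSum x k| ≤ (1 - 3 * x)⁻¹ := by
  rw [diagSum, abs_of_nonneg (tsum_nonneg fun n => (term_bounds hx₁ k n).1),
    ← tsum_geometric_of_lt_one (by linarith : 0 ≤ 3 * x) (by linarith)]
  exact (summable_term hx₁ hx₂ k).tsum_le_tsum (fun n => (term_bounds hx₁ k n).2)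
    (summable_geometric_of_lt_one (by linarith) (by linarith))

lemma diagSum_neg (x : ℝ) (k : ℤ) : diagSum x (-k) = diagSum x k := by
  simp only [diagSum, centralCoeff_neg]

lemma diagSum_rec {x : ℝ} (hx₁ : 0 < x) (hx₂ : x < 1 / 3) (k : ℤ) :
    diagSum x k = (if k = 0 then 1 else 0) +
      x * (diagSum x (k - 1) + diagSum x k + diagSum x (k + 1)) := by
  have h1 := summable_term hx₁ hx₂ (k - 1)
  have h2 := summable_term hx₁ hx₂ k
  have h3 := summable_term hx₁ hx₂ (k + 1)
  conv_lhs => rw [diagSum, h2.tsum_eq_zero_add]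
  simp only [diagSum]
  rw [← h1.tsum_add h2, ← (h1.add h2).tsum_add h3, ← tsum_mul_left]
  congr 1
  · simp [centralCoeff]
  · refine tsum_congr fun n => ?_
    simp only [centralCoeff]
    push_cast
    ring

/-- The two-term recurrence obtained by factoring the three-term one; boundedness of `diagSum`
excludes the solution growing like `(μ / x) ^ k`, where `μ` is the root conjugate to `ν`. -/
lemma diagSum_succ {x s : ℝ} (hx₁ : 0 < x) (hx₂ : x < 1 / 3) (hs : 0 ≤ s)
    (hs2 : s ^ 2 = 1 - 2 * x - 3 * x ^ 2) (k : ℕ) :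
    x * diagSum x (k + 1) = (1 - x - s) / 2 * diagSum x k := by
  set ν := (1 - x - s) / 2 with hν
  set μ := (1 - x + s) / 2 with hμ
  set E : ℕ → ℝ := fun k => x * diagSum x (k + 1) - ν * diagSum x k with hE
  have hprod : ν * μ = x ^ 2 := by rw [hν, hμ]; linear_combination -hs2 / 4
  have hsum : ν + μ = 1 - x := by rw [hν, hμ]; ring
  have hrec : ∀ j, E (j + 1) = μ / x * E j := by
    intro j
    have h := diagSum_rec hx₁ hx₂ ((j : ℤ) + 1)
    rw [if_neg (by omega), add_sub_cancel_right] at h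
    rw [div_mul_eq_mul_div, eq_div_iff hx₁.ne']
    simp only [hE]
    push_cast
    linear_combination -x * h - x * diagSum x (j + 1) * hsum + diagSum x j * hprod
  have hpow : ∀ j m, E (j + m) = (μ / x) ^ m * E j := by
    intro j m
    induction m with
    | zero => simp
    | succ m ih => rw [← add_assoc, hrec, ih]; ring
  have hbd : ∀ j, |E j| ≤ (x + |ν|) * (1 - 3 * x)⁻¹ := by
    intro j
    have h1 := abs_diagSum_le hx₁ hx₂ ((j : ℤ) + 1)
    have h2 := abs_diagSum_le hx₁ hx₂ j
    calc |E j| ≤ |x * diagSum x (j + 1)| + |ν * diagSum x j| := abs_sub _ _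
      _ = x * |diagSum x (j + 1)| + |ν| * |diagSum x j| := by
        rw [abs_mul, abs_mul, abs_of_pos hx₁]
      _ ≤ x * (1 - 3 * x)⁻¹ + |ν| * (1 - 3 * x)⁻¹ := by gcongr
      _ = _ := by ring
  have hone : 1 < μ / x := by rw [one_lt_div hx₁, hμ]; linarith
  have hzero : E k = 0 := by
    by_contra hne
    have hpos : 0 < |E k| := abs_pos.mpr hne
    obtain ⟨m, hm⟩ := pow_unbounded_of_one_lt ((x + |ν|) * (1 - 3 * x)⁻¹ / |E k|) hone
    rw [div_lt_iff₀ hpos] at hm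
    have h := hbd (k + m)
    rw [hpow, abs_mul, abs_of_pos (pow_pos (by linarith) m)] at h
    linarith
  exact sub_eq_zero.mp hzero

theorem trinomial_diagonal_generating_function (lam : ℕ) (x : ℝ)
    (hx₁ : 0 < x) (hx₂ : x < 1 / 3)
    (ν : ℝ) (hν : ν = (1 - x - Real.sqrt (1 - 2 * x - 3 * x ^ 2)) / 2) :
    Summable (fun n : ℕ => |(T n (n + lam) : ℝ) * x ^ (n + lam)|) ∧
      ∑' n : ℕ, (T n (n + lam) : ℝ) * x ^ (n + lam) =
        ν ^ lam / Real.sqrt (1 - 2 * x - 3 * x ^ 2) := by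
  have hD : 0 < 1 - 2 * x - 3 * x ^ 2 := by nlinarith
  have hterm : ∀ n : ℕ, (T n (n + lam) : ℝ) * x ^ (n + lam) =
      x ^ lam * ((centralCoeff n lam : ℝ) * x ^ n) := by
    intro n
    rw [T_eq_centralCoeff]
    push_cast
    rw [add_sub_cancel_left, pow_add]
    ring
  simp only [hterm]
  refine ⟨((summable_term hx₁ hx₂ lam).mul_left _).abs, ?_⟩
  rw [tsum_mul_left]
  change x ^ lam * diagSum x lam = _
  set s := Real.sqrt (1 - 2 * x - 3 * x ^ 2) with hs
  have hspos : 0 < s := Real.sqrt_pos.mpr hD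
  have hstep := diagSum_succ hx₁ hx₂ hspos.le (Real.sq_sqrt hD.le)
  rw [← hν] at hstep
  have hgeom : ∀ k : ℕ, x ^ k * diagSum x k = ν ^ k * diagSum x 0 := by
    intro k
    induction k with
    | zero => simp
    | succ k ih =>
      push_cast
      linear_combination x ^ k * hstep k + ν * ih
  have h0 := diagSum_rec hx₁ hx₂ 0
  rw [if_pos rfl, zero_sub, diagSum_neg, zero_add] at h0
  have h1 := hstep 0
  push_cast at h1
  rw [hgeom, eq_div_iff hspos.ne']
  linear_combination ν ^ lam * (h0 + 2 * h1 + 2 * diagSum x 0 * hν)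
end

section
/- Fix a natural number λ and a real number x with 0 < x < 1/3, and set ν := (1 − x − √(1 − 2x − 3x^2))/2. Then ∫_0^π cos(λφ) / (1 − x − 2x·cos φ) dφ = (π / √(1 − 2x − 3x^2)) · (ν/x)^λ. -/
/-!
Let `I n` be the integral with `lam = n`, let `s = √(1 - 2x - 3x²)` and `r = ν / x`, so that
`0 < r < 1` and `x r² - (1 - x) r + x = 0`. Multiplying `cos ((n+1) φ)`, whose integral is `0`, by
`1 = (1 - x - 2x cos φ) / (1 - x - 2x cos φ)` and using the product-to-sum formula gives
`(1 - x) I (n+1) = x (I (n+2) + I n)`, and in the same way `(1 - x) I 0 - 2x I 1 = π`.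
The characteristic roots of the recurrence are `r` and `1 / r > 1`; since `I` is bounded, only
the first one occurs, so `I n = r ^ n * I 0`. The relation between `I 0` and `I 1` then reads
`(1 - x - 2ν) I 0 = π`, where `1 - x - 2ν = s`.
-/

open Real

/-- A bounded solution of the recurrence with characteristic roots `r` and `1 / r`, `0 < r < 1`,
is geometric with ratio `r`. -/
lemma eq_pow_mul_of_bounded_recurrence {I : ℕ → ℝ} {r B : ℝ} (hr₀ : 0 < r) (hr₁ : r < 1)
    (hB : ∀ n, |I n| ≤ B) (hrec : ∀ n, r * (I (n + 2) + I n) = (r ^ 2 + 1) * I (n + 1)) (n : ℕ) :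
    I n = r ^ n * I 0 := by
  have hJ : ∀ n k, r ^ k * (I (n + k + 1) - r * I (n + k)) = I (n + 1) - r * I n := by
    intro n k
    induction k with
    | zero => simp
    | succ k ih =>
      rw [← ih, pow_succ]
      have := hrec (n + k)
      simp only [← add_assoc] at this ⊢
      linear_combination r ^ k * this
  have hstep : ∀ n, I (n + 1) - r * I n = 0 := by
    intro n
    have hbound : ∀ k, |I (n + 1) - r * I n| ≤ r ^ k * (B + r * B) := by
      intro k
      rw [← hJ n k, abs_mul, abs_of_pos (pow_pos hr₀ k)]
      gcongr
      refine (abs_sub _ _).trans ?_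
      rw [abs_mul, abs_of_pos hr₀]
      gcongr <;> exact hB _
    have hlim : Filter.Tendsto (fun k : ℕ => r ^ k * (B + r * B)) Filter.atTop (nhds 0) := by
      simpa using (tendsto_pow_atTop_nhds_zero_of_lt_one hr₀.le hr₁).mul_const (B + r * B)
    exact abs_nonpos_iff.mp (ge_of_tendsto' hlim hbound)
  induction n with
  | zero => simp
  | succ n ih => rw [pow_succ]; linear_combination hstep n + r * ih

lemma integral_cos_nat_succ_mul (n : ℕ) : ∫ φ in (0:ℝ)..π, cos ((n + 1 : ℕ) * φ) = 0 := by
  rw [intervalIntegral.integral_comp_mul_left (fun t => cos t) (by positivity), integral_cos,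
    sin_nat_mul_pi]
  simp

theorem integral_cos_lambda_div_one_sub_x_sub_two_x_cos (lam : ℕ) (x : ℝ)
    (hx₁ : 0 < x) (hx₂ : x < 1 / 3)
    (ν : ℝ) (hν : ν = (1 - x - Real.sqrt (1 - 2 * x - 3 * x ^ 2)) / 2) :
    ∫ φ in (0:ℝ)..π, Real.cos (lam * φ) / (1 - x - 2 * x * Real.cos φ) =
      (π / Real.sqrt (1 - 2 * x - 3 * x ^ 2)) * (ν / x) ^ lam := by
  have hdisc : 0 < 1 - 2 * x - 3 * x ^ 2 := by nlinarith
  have hs := sq_sqrt hdisc.le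
  have hs₀ := sqrt_pos.mpr hdisc
  set s := √(1 - 2 * x - 3 * x ^ 2)
  -- `(1 - x)² - s² = (2x)²` and `s² - (1 - 3x)² = 4x (1 - 3x)` place `ν` between `0` and `x`.
  have hν₀ : 0 < ν := by nlinarith
  have hνx : ν < x := by
    have : 1 - 3 * x < s := lt_of_pow_lt_pow_left₀ 2 hs₀.le (by nlinarith)
    linarith
  have hνq : ν ^ 2 - (1 - x) * ν + x ^ 2 = 0 := by
    rw [hν]; linear_combination hs / 4
  have hden : ∀ φ, 1 - 3 * x ≤ 1 - x - 2 * x * cos φ := fun φ => by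
    nlinarith [cos_le_one φ]
  have hden₀ : ∀ φ, 1 - x - 2 * x * cos φ ≠ 0 := fun φ =>
    ((by linarith : 0 < 1 - 3 * x).trans_le (hden φ)).ne'
  set I : ℕ → ℝ := fun n => ∫ φ in (0:ℝ)..π, cos (n * φ) / (1 - x - 2 * x * cos φ) with hI
  have hint : ∀ n : ℕ, IntervalIntegrable
      (fun φ => cos (n * φ) / (1 - x - 2 * x * cos φ)) MeasureTheory.volume 0 π := fun n =>
    (Continuous.div (by fun_prop) (by fun_prop) hden₀).intervalIntegrable _ _
  have hbdd : ∀ n, |I n| ≤ 1 / (1 - 3 * x) * |π - 0| := by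
    intro n
    rw [← norm_eq_abs]
    refine intervalIntegral.norm_integral_le_of_norm_le_const fun φ _ => ?_
    have h3 : 0 < 1 - 3 * x := by linarith
    rw [norm_div, norm_eq_abs, norm_eq_abs, abs_of_pos (h3.trans_le (hden φ))]
    exact div_le_div₀ zero_le_one (abs_cos_le_one _) h3 (hden φ)
  have hrec : ∀ n, (1 - x) * I (n + 1) - x * (I (n + 2) + I n) = 0 := by
    intro n
    rw [← integral_cos_nat_succ_mul n]
    simp only [hI]
    rw [← intervalIntegral.integral_add (hint _) (hint _),
      ← intervalIntegral.integral_const_mul, ← intervalIntegral.integral_const_mul,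
      ← intervalIntegral.integral_sub ((hint _).const_mul _)
        (((hint _).add (hint _)).const_mul _)]
    refine intervalIntegral.integral_congr fun φ _ => ?_
    have h₁ : cos ((n + 2 : ℕ) * φ) + cos (n * φ) = 2 * cos ((n + 1 : ℕ) * φ) * cos φ := by
      rw [cos_add_cos]
      push_cast
      ring_nf
    rw [← add_div, h₁, ← mul_div_assoc, ← mul_div_assoc, ← sub_div, div_eq_iff (hden₀ φ)]
    ring
  have hzero : (1 - x) * I 0 - 2 * x * I 1 = π := by
    have hπ : ∫ _ in (0:ℝ)..π, (1:ℝ) = π := by simp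
    rw [← hπ]
    simp only [hI]
    rw [← intervalIntegral.integral_const_mul, ← intervalIntegral.integral_const_mul,
      ← intervalIntegral.integral_sub ((hint _).const_mul _) ((hint _).const_mul _)]
    refine intervalIntegral.integral_congr fun φ _ => ?_
    simp only [Nat.cast_zero, zero_mul, cos_zero, Nat.cast_one, one_mul]
    rw [← mul_div_assoc, ← mul_div_assoc, ← sub_div, div_eq_iff (hden₀ φ)]
    ring
  have hgeo := eq_pow_mul_of_bounded_recurrence (r := ν / x) (div_pos hν₀ hx₁)
    ((div_lt_one hx₁).mpr hνx) hbdd (fun n => by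
      field_simp
      linear_combination (-ν) * hrec n - I (n + 1) * hνq)
  have hI₀ : I 0 = π / s := by
    rw [eq_div_iff hs₀.ne', ← hzero, hgeo 1]
    field_simp
    linear_combination 2 * I 0 * hν
  change I lam = _
  rw [hgeo lam, hI₀, mul_comm]
end

section
/- For every real number b with |b| < 1 and every natural number λ, the Poisson-kernel integral satisfies ∫_0^π cos(λφ) / (1 − 2b·cos φ + b^2) dφ = π · b^λ / (1 − b^2). -/
open Real

/-!
Write `I n` for the integral with `lam = n`. Multiplying the integrand by its denominator and using
`cos (n φ) + cos ((n + 2) φ) = 2 cos φ cos ((n + 1) φ)` gives, by `∫ cos ((n + 1) φ) = 0` on `[0, π]`,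
the recurrence `b (I n + I (n + 2)) = (1 + b ^ 2) I (n + 1)`, together with
`(1 + b ^ 2) I 0 - 2 b I 1 = π`. For `D n = I (n + 1) - b I n` the recurrence says `D n = b D (n + 1)`,
hence `D n = b ^ k D (n + k)` for all `k`. The sequence `I`, and so `D`, is bounded, and `|b| < 1`;
thus `D = 0`, that is, `I (n + 1) = b I n`, and the initial relation yields `I 0 = π / (1 - b ^ 2)`.
-/

/-- The Poisson-kernel integral `∫ cos (n φ) / (1 - 2 b cos φ + b²)` over `[0, π]`. -/
noncomputable def poissonInt (b : ℝ) (n : ℕ) : ℝ :=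
  ∫ φ in (0:ℝ)..π, Real.cos (n * φ) / (1 - 2 * b * Real.cos φ + b ^ 2)

lemma poisson_denom_ge (b φ : ℝ) :
    (1 - |b|) ^ 2 ≤ 1 - 2 * b * Real.cos φ + b ^ 2 := by
  have h : b * Real.cos φ ≤ |b| := by
    calc b * Real.cos φ ≤ |b * Real.cos φ| := le_abs_self _
      _ = |b| * |Real.cos φ| := abs_mul _ _
      _ ≤ |b| * 1 := by gcongr; exact Real.abs_cos_le_one φ
      _ = |b| := mul_one _
  nlinarith [sq_abs b]

lemma poisson_denom_pos {b : ℝ} (hb : |b| < 1) (φ : ℝ) :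
    0 < 1 - 2 * b * Real.cos φ + b ^ 2 :=
  lt_of_lt_of_le (pow_pos (sub_pos.2 hb) 2) (poisson_denom_ge b φ)

lemma poisson_intervalIntegrable {b : ℝ} (hb : |b| < 1) (n : ℕ) :
    IntervalIntegrable (fun φ : ℝ => Real.cos (n * φ) / (1 - 2 * b * Real.cos φ + b ^ 2))
      MeasureTheory.volume 0 π := by
  apply Continuous.intervalIntegrable
  exact Continuous.div (by fun_prop) (by fun_prop) fun φ => (poisson_denom_pos hb φ).ne'

lemma abs_poissonInt_le {b : ℝ} (hb : |b| < 1) (n : ℕ) :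
    |poissonInt b n| ≤ 1 / (1 - |b|) ^ 2 * π := by
  have h := intervalIntegral.norm_integral_le_of_norm_le_const (a := 0) (b := π)
    (C := 1 / (1 - |b|) ^ 2)
    (f := fun φ : ℝ => Real.cos (n * φ) / (1 - 2 * b * Real.cos φ + b ^ 2)) (by
      intro φ _
      rw [Real.norm_eq_abs, abs_div, abs_of_pos (poisson_denom_pos hb φ)]
      exact div_le_div₀ zero_le_one (Real.abs_cos_le_one _) (pow_pos (sub_pos.2 hb) 2)
        (poisson_denom_ge b φ))
  rwa [sub_zero, abs_of_pos Real.pi_pos, Real.norm_eq_abs] at h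

lemma integral_cos_succ_mul (n : ℕ) : ∫ φ in (0:ℝ)..π, Real.cos (((n + 1 : ℕ) : ℝ) * φ) = 0 := by
  have h : ((n + 1 : ℕ) : ℝ) ≠ 0 := by positivity
  rw [intervalIntegral.integral_comp_mul_left (fun x => Real.cos x) h, integral_cos,
    Real.sin_nat_mul_pi]
  simp

lemma poissonInt_recurrence {b : ℝ} (hb : |b| < 1) (n : ℕ) :
    b * (poissonInt b n + poissonInt b (n + 2)) = (1 + b ^ 2) * poissonInt b (n + 1) := by
  have h := integral_cos_succ_mul n
  have e : ∀ φ : ℝ, Real.cos (((n + 1 : ℕ) : ℝ) * φ) =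
      (1 + b ^ 2) * (Real.cos (((n + 1 : ℕ) : ℝ) * φ) / (1 - 2 * b * Real.cos φ + b ^ 2))
      - b * (Real.cos (n * φ) / (1 - 2 * b * Real.cos φ + b ^ 2)
        + Real.cos (((n + 2 : ℕ) : ℝ) * φ) / (1 - 2 * b * Real.cos φ + b ^ 2)) := by
    intro φ
    have hp := (poisson_denom_pos hb φ).ne'
    have h1 : Real.cos (n * φ) + Real.cos (((n + 2 : ℕ) : ℝ) * φ) =
        2 * Real.cos φ * Real.cos (((n + 1 : ℕ) : ℝ) * φ) := by
      have e1 : (n : ℝ) * φ = ((n + 1 : ℕ) : ℝ) * φ - φ := by push_cast; ring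
      have e2 : ((n + 2 : ℕ) : ℝ) * φ = ((n + 1 : ℕ) : ℝ) * φ + φ := by push_cast; ring
      rw [e1, e2, Real.cos_sub, Real.cos_add]
      ring
    rw [← add_div, h1, ← mul_div_assoc, ← mul_div_assoc, ← sub_div, eq_div_iff hp]
    ring
  rw [intervalIntegral.integral_congr (fun φ _ => e φ), intervalIntegral.integral_sub,
    intervalIntegral.integral_const_mul, intervalIntegral.integral_const_mul,
    intervalIntegral.integral_add (poisson_intervalIntegrable hb _)
      (poisson_intervalIntegrable hb _)] at h
  · unfold poissonInt
    linarith
  · exact (poisson_intervalIntegrable hb _).const_mul _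
  · exact ((poisson_intervalIntegrable hb _).add (poisson_intervalIntegrable hb _)).const_mul _

lemma poissonInt_initial {b : ℝ} (hb : |b| < 1) :
    (1 + b ^ 2) * poissonInt b 0 - 2 * b * poissonInt b 1 = π := by
  unfold poissonInt
  rw [← intervalIntegral.integral_const_mul, ← intervalIntegral.integral_const_mul,
    ← intervalIntegral.integral_sub ((poisson_intervalIntegrable hb _).const_mul _)
      ((poisson_intervalIntegrable hb _).const_mul _)]
  have e : ∀ φ : ℝ, (1 + b ^ 2) *
      (Real.cos (((0 : ℕ) : ℝ) * φ) / (1 - 2 * b * Real.cos φ + b ^ 2))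
      - 2 * b * (Real.cos (((1 : ℕ) : ℝ) * φ) / (1 - 2 * b * Real.cos φ + b ^ 2)) = 1 := by
    intro φ
    have hp := (poisson_denom_pos hb φ).ne'
    rw [← mul_div_assoc, ← mul_div_assoc, ← sub_div, div_eq_one_iff_eq hp]
    simp
    ring
  rw [intervalIntegral.integral_congr (fun φ _ => e φ)]
  simp

/-- The bounded solutions of the recurrence are geometric with ratio `b`. -/
lemma poissonInt_succ {b : ℝ} (hb : |b| < 1) (n : ℕ) :
    poissonInt b (n + 1) = b * poissonInt b n := by
  have hk : ∀ k : ℕ, poissonInt b (n + 1) - b * poissonInt b n =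
      b ^ k * (poissonInt b (n + k + 1) - b * poissonInt b (n + k)) := by
    intro k
    induction k with
    | zero => simp
    | succ k ih =>
      rw [ih, ← add_assoc, pow_succ]
      linear_combination (-b ^ k) * poissonInt_recurrence hb (n + k)
  have hlim : Filter.Tendsto
      (fun k : ℕ => b ^ k * (poissonInt b (n + k + 1) - b * poissonInt b (n + k)))
      Filter.atTop (nhds 0) := by
    have h0 : Filter.Tendsto (fun k : ℕ => |b| ^ k * (2 * (1 / (1 - |b|) ^ 2 * π)))
        Filter.atTop (nhds 0) := by
      simpa only [zero_mul] using
        (tendsto_pow_atTop_nhds_zero_of_lt_one (abs_nonneg b) hb).mul_const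
        (2 * (1 / (1 - |b|) ^ 2 * π))
    refine squeeze_zero_norm (fun k => ?_) h0
    rw [Real.norm_eq_abs, abs_mul, abs_pow]
    gcongr
    have h1 := abs_poissonInt_le hb (n + k + 1)
    have h2 := abs_poissonInt_le hb (n + k)
    have h3 := abs_sub (poissonInt b (n + k + 1)) (b * poissonInt b (n + k))
    rw [abs_mul] at h3
    have h4 : |b| * |poissonInt b (n + k)| ≤ |poissonInt b (n + k)| :=
      mul_le_of_le_one_left (abs_nonneg _) hb.le
    linarith
  have h := tendsto_nhds_unique (hlim.congr fun k => (hk k).symm) tendsto_const_nhds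
  linarith

theorem poisson_kernel_integral (b : ℝ) (hb : |b| < 1) (lam : ℕ) :
    ∫ φ in (0:ℝ)..π, Real.cos (lam * φ) / (1 - 2 * b * Real.cos φ + b ^ 2) =
      π * b ^ lam / (1 - b ^ 2) := by
  change poissonInt b lam = _
  have hb2 : 1 - b ^ 2 ≠ 0 := (sub_pos.2 ((sq_lt_one_iff_abs_lt_one b).2 hb)).ne'
  induction lam with
  | zero =>
    have h := poissonInt_initial hb
    rw [poissonInt_succ hb 0] at h
    rw [eq_div_iff hb2, pow_zero]
    linarith
  | succ n ih =>
    rw [poissonInt_succ hb, ih]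
    ring
end
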